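/- The number of 3-stack sortable permutations of length n satisfies W_3(n) ≤ Σ_{k=1}^{⌊(n+1)/2⌋} W_2(n, k−1) · binomial(2n−2k, n−1), where W_2(n, k−1) = (n+k−1)!(2n−k)!/(k!(n+1−k)!(2k−1)!(2n−2k+1)!). -/

import Mathlib

open Finset Nat

def push (x : ℕ) : List ℕ → List ℕ → List ℕ × List ℕ
  | [], out => ([x], out)
  | t :: s, out => if t < x then push x s (out ++ [t]) else (x :: t :: s, out)

def sortAux : List ℕ → List ℕ → List ℕ → List ℕ
  | [], stack, out => out ++ stack
  | x :: xs, stack, out =>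
      let r := push x stack out
      sortAux xs r.1 r.2

/-- The stack sorting map `s`: `s(∅) = ∅` and `s(L n R) = s(L) s(R) n` with `n` maximal. -/
def stackSort (p : List ℕ) : List ℕ := sortAux p [] []

/-!
Read backwards, a run of the stack on `p` is determined by `s(p)` and by the number of pushes
before each pop. At least one push precedes the first pop, and at least two precede the pop of a
letter that follows a larger one. If `s(p)` has length `n` and `k` ascending runs, this forces
`2k - 1` of the `n` pushes; the other `n - 2k + 1` can be distributed among the `n` pops in
`binomial(2n - 2k, n - 1)` ways.

If `p = L m R` with `m` maximal is 2-stack sortable, then `s(L) s(R) m` avoids `231`, so `p` is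
determined by the relative orders of `L` and `R` and by the number of letters of `R` below the
maximum of `L`. This gives labelled binary trees, in which `k` nodes have no left child and
`n + 1 - k` have no right child if `p` has length `n` and `k` ascending runs. Let `y` and `z` mark
these nodes, and let `u` mark the labels which the tree admits when it becomes a right child. The
generating function of the non-empty trees satisfies
`F(u) = u y (u z + F(u)) + u F(u) (u z + F(u) - z - F(1)) / (u - 1)`.
The substitution `y = a (1 - b)², z = b (1 - a)²` makes `F(1) = a b (1 - a - b)`, and Lagrange-Good
inversion in `a` and `b` extracts the number of trees, which is `W_2(n, k - 1)`.
-/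

/-! ### The stack sorting map -/

theorem push_perm (x : ℕ) (st out : List ℕ) :
    ((push x st out).1 ++ (push x st out).2).Perm (x :: st ++ out) := by
  induction st generalizing out with
  | nil => exact .refl _
  | cons t st ih =>
    rw [push]
    split_ifs
    · refine (ih _).trans ?_
      rw [List.cons_append, List.cons_append, ← List.append_assoc]
      exact (List.perm_append_singleton t _).cons x
    · exact .refl _

theorem sortAux_perm (xs st out : List ℕ) : (sortAux xs st out).Perm (xs ++ (st ++ out)) := by
  induction xs generalizing st out with
  | nil => exact List.perm_append_comm
  | cons x xs ih => exact (ih _ _).trans (((push_perm x st out).append_left xs).trans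
      List.perm_middle)

theorem stackSort_perm (p : List ℕ) : (stackSort p).Perm p := by
  simpa only [stackSort, List.append_nil] using sortAux_perm p [] []

theorem length_stackSort (p : List ℕ) : (stackSort p).length = p.length :=
  (stackSort_perm p).length_eq

theorem mem_stackSort {p : List ℕ} {x : ℕ} : x ∈ stackSort p ↔ x ∈ p :=
  (stackSort_perm p).mem_iff

theorem push_of_forall_lt {m : ℕ} {st : List ℕ} (hst : ∀ y ∈ st, y < m) (out : List ℕ) :
    push m st out = ([m], out ++ st) := by
  induction st generalizing out with
  | nil => simp only [push, List.append_nil]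
  | cons t st ih =>
    rw [List.forall_mem_cons] at hst
    rw [push, if_pos hst.1, ih hst.2, List.append_assoc, List.singleton_append]

theorem push_append_bottom {m x : ℕ} (hx : x < m) (st out : List ℕ) :
    push x (st ++ [m]) out = ((push x st out).1 ++ [m], (push x st out).2) := by
  induction st generalizing out with
  | nil => simp only [List.nil_append, push, if_neg hx.not_gt, List.singleton_append]
  | cons t st ih =>
    simp only [List.cons_append, push]
    split_ifs
    · exact ih _
    · rfl

theorem push_append_out (x : ℕ) (st o out : List ℕ) :
    push x st (o ++ out) = ((push x st out).1, o ++ (push x st out).2) := by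
  induction st generalizing out with
  | nil => rfl
  | cons t st ih =>
    simp only [push]
    split_ifs
    · rw [List.append_assoc, ih]
    · rfl

theorem mem_of_mem_push_stack {x y : ℕ} {st out : List ℕ} (hy : y ∈ (push x st out).1) :
    y ∈ x :: st := by
  have hstack : (push x st out).1 = (push x st []).1 := by
    simpa only [List.append_nil] using congrArg Prod.fst (push_append_out x st out [])
  have hperm := push_perm x st []
  rw [List.append_nil] at hperm
  exact hperm.mem_iff.1 (List.mem_append_left _ (hstack ▸ hy))

theorem sortAux_append_out (xs st o out : List ℕ) :
    sortAux xs st (o ++ out) = o ++ sortAux xs st out := by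
  induction xs generalizing st out with
  | nil => simp only [sortAux, List.append_assoc]
  | cons x xs ih => simp only [sortAux, push_append_out, ih]

theorem sortAux_append_bottom {m : ℕ} {xs : List ℕ} (hxs : ∀ x ∈ xs, x < m) (st out : List ℕ) :
    sortAux xs (st ++ [m]) out = sortAux xs st out ++ [m] := by
  induction xs generalizing st out with
  | nil => simp only [sortAux, List.append_assoc]
  | cons x xs ih =>
    rw [List.forall_mem_cons] at hxs
    simp only [sortAux, push_append_bottom hxs.1, ih hxs.2]

theorem sortAux_append_cons {m : ℕ} {L st : List ℕ} (hL : ∀ x ∈ L, x < m)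
    (hst : ∀ x ∈ st, x < m) (R out : List ℕ) :
    sortAux (L ++ m :: R) st out = sortAux R [m] (sortAux L st out) := by
  induction L generalizing st out with
  | nil => simp only [List.nil_append, sortAux, push_of_forall_lt hst]
  | cons x L ih =>
    rw [List.forall_mem_cons] at hL
    have hstack : ∀ y ∈ x :: st, y < m := List.forall_mem_cons.2 ⟨hL.1, hst⟩
    exact ih hL.2 (fun y hy => hstack y (mem_of_mem_push_stack hy)) _

theorem stackSort_append_cons {m : ℕ} {L R : List ℕ} (hL : ∀ x ∈ L, x < m)
    (hR : ∀ x ∈ R, x < m) :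
    stackSort (L ++ m :: R) = stackSort L ++ stackSort R ++ [m] := by
  have hout := sortAux_append_out R [m] (stackSort L) []
  have hbottom := sortAux_append_bottom hR [] []
  rw [List.append_nil] at hout
  rw [List.nil_append] at hbottom
  rw [stackSort, sortAux_append_cons hL (by simp), ← stackSort, hout, hbottom, ← stackSort,
    List.append_assoc]

theorem nodup_max_induction {P : List ℕ → Prop} (nil : P [])
    (node : ∀ L m R, (∀ x ∈ L, x < m) → (∀ x ∈ R, x < m) → (L ++ m :: R).Nodup →
      P L → P R → P (L ++ m :: R)) (p : List ℕ) (hp : p.Nodup) : P p := by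
  induction hn : p.length using Nat.strong_induction_on generalizing p with
  | _ n ih =>
    rcases eq_or_ne p [] with rfl | hne
    · exact nil
    obtain ⟨m, hm, hmax⟩ := p.toFinset.exists_max_image id (List.toFinset_nonempty_iff p |>.2 hne)
    obtain ⟨L, R, rfl⟩ := List.append_of_mem (List.mem_toFinset.1 hm)
    have hlt : ∀ x ∈ L ++ R, x < m := fun x hx =>
      (hmax x (by simp only [List.mem_toFinset]; grind)).lt_of_ne
        fun h => (List.nodup_middle.1 hp).notMem (by rwa [show x = m from h] at hx)
    rw [List.forall_mem_append] at hlt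
    rw [List.length_append, List.length_cons] at hn
    exact node L m R hlt.1 hlt.2 hp
      (ih _ (by omega) L (hp.sublist (List.sublist_append_left _ _)) rfl)
      (ih _ (by omega) R (hp.sublist (by simp)) rfl)

theorem exists_stackSort_eq_concat {L : List ℕ} (hL : L.Nodup) (hne : L ≠ []) :
    ∃ A ℓ, stackSort L = A ++ [ℓ] ∧ ∀ x ∈ A, x < ℓ := by
  revert hne
  refine nodup_max_induction (P := fun L => L ≠ [] → ∃ A ℓ, stackSort L = A ++ [ℓ] ∧ ∀ x ∈ A, x < ℓ)
    (fun h => absurd rfl h) (fun L m R hLm hRm _ _ _ _ => ?_) L hL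
  refine ⟨_, m, stackSort_append_cons hLm hRm, List.forall_mem_append.2 ⟨?_, ?_⟩⟩
  · exact fun x hx => hLm x (mem_stackSort.1 hx)
  · exact fun x hx => hRm x (mem_stackSort.1 hx)

/-! ### The pattern 231 -/

/-- A word avoids `231` if it has no subsequence `b c a` with `a < b < c`. -/
def Avoids231 (w : List ℕ) : Prop :=
  ∀ b c a, [b, c, a].Sublist w → a < b → b < c → False

theorem Avoids231.sublist {v w : List ℕ} (hw : Avoids231 w) (h : v.Sublist w) : Avoids231 v :=
  fun b c a hs => hw b c a (hs.trans h)

theorem triple_sublist_append {b c a : ℕ} {u v : List ℕ} (h : [b, c, a].Sublist (u ++ v)) :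
    [b, c, a].Sublist u ∨ [b, c, a].Sublist v ∨ b ∈ u ∧ a ∈ v := by
  obtain ⟨l₁, l₂, hl, hu, hv⟩ := List.sublist_append_iff.1 h
  rcases l₁ with _ | ⟨x, l₁⟩
  · exact .inr (.inl (by rwa [hl, List.nil_append]))
  rcases l₂.eq_nil_or_concat' with rfl | ⟨l₂, y, rfl⟩
  · exact .inl (by rwa [hl, List.append_nil])
  refine .inr (.inr ⟨hu.subset ?_, hv.subset ?_⟩)
  · obtain rfl : b = x := by simpa using congrArg List.head? hl
    exact List.mem_cons_self
  · have hlast : [b, c] ++ [a] = (x :: l₁ ++ l₂) ++ [y] := hl.trans (List.append_assoc _ _ _).symm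
    obtain rfl : a = y := List.singleton_inj.1 (List.append_inj' hlast rfl).2
    simp

theorem avoids231_of_stackSort_sorted {w : List ℕ} (hw : w.Nodup)
    (h : (stackSort w).Pairwise (· < ·)) : Avoids231 w := by
  revert h
  refine nodup_max_induction (P := fun w => (stackSort w).Pairwise (· < ·) → Avoids231 w)
    (by simp [Avoids231]) (fun L m R hL hR _ ihL ihR h b c a hs hab hbc => ?_) w hw
  rw [stackSort_append_cons hL hR, List.append_assoc, List.pairwise_append,
    List.pairwise_append] at h
  obtain ⟨hsL, ⟨hsR, -, -⟩, hLR⟩ := h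
  have hlt : ∀ x ∈ L, ∀ y ∈ R, x < y := fun x hx y hy =>
    hLR x (mem_stackSort.2 hx) y (List.mem_append_left _ (mem_stackSort.2 hy))
  have hcm : c ≤ m := by
    rcases List.mem_append.1 (hs.subset (show c ∈ [b, c, a] by simp)) with hc | hc
    · exact (hL c hc).le
    · exact (List.mem_cons.1 hc).elim le_of_eq fun hc => (hR c hc).le
  rw [List.append_cons] at hs
  rcases triple_sublist_append hs with hs | hs | ⟨hb, ha⟩
  · rcases triple_sublist_append hs with hs | hs | ⟨hb, ha⟩
    · exact ihL hsL b c a hs hab hbc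
    · simpa using hs.length_le
    · exact absurd (hL b hb) (by have := List.mem_singleton.1 ha; omega)
  · exact ihR hsR b c a hs hab hbc
  · rcases List.mem_append.1 hb with hb | hb
    · exact absurd (hlt b hb a ha) (by omega)
    · exact absurd (List.mem_singleton.1 hb) (by omega)

/-! ### Stack words and the fibres of stack sorting -/

/-- The number of maximal increasing runs of a word: one more than its number of descents, and `0`
on the empty word. -/
def numRuns : List ℕ → ℕ
  | [] => 0
  | [_] => 1
  | x :: y :: t => numRuns (y :: t) + if y < x then 1 else 0

theorem numRuns_cons_of_forall_lt {m : ℕ} {R : List ℕ} (hR : ∀ x ∈ R, x < m) :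
    numRuns (m :: R) = numRuns R + 1 := by
  cases R with
  | nil => rfl
  | cons y t => rw [numRuns, if_pos (hR y List.mem_cons_self)]

theorem numRuns_append_cons {m : ℕ} {L R : List ℕ} (hL : ∀ x ∈ L, x < m) (hR : ∀ x ∈ R, x < m) :
    numRuns (L ++ m :: R) = numRuns L + numRuns R + if L = [] then 1 else 0 := by
  induction L with
  | nil => rw [List.nil_append, numRuns_cons_of_forall_lt hR, if_pos rfl, numRuns, zero_add]
  | cons x L ih =>
    rw [List.forall_mem_cons] at hL
    have ih := ih hL.2
    cases L with
    | nil => simp [numRuns, numRuns_cons_of_forall_lt hR, hL.1.le, add_comm]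
    | cons y t =>
      simp only [List.cons_append, numRuns, reduceCtorEq, if_false] at ih ⊢
      omega

theorem one_le_numRuns {q : List ℕ} (hq : q ≠ []) : 1 ≤ numRuns q := by
  induction q with
  | nil => exact absurd rfl hq
  | cons x t ih =>
    cases t with
    | nil => exact le_rfl
    | cons y t => exact (ih (List.cons_ne_nil y t)).trans (Nat.le_add_right _ _)

/-- The least possible numbers of pushes before the pops of the letters of a word, given that `x`
has just been popped: a letter smaller than `x` was not on top of the stack, and its push was
preceded by the push of a larger letter. -/
def minPushAfter : ℕ → List ℕ → List ℕ
  | _, [] => []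
  | x, y :: t => (if y < x then 2 else 0) :: minPushAfter y t

/-- The least possible numbers of pushes before the pops of the letters of a stack-sorted word. -/
def minPush : List ℕ → List ℕ
  | [] => []
  | y :: t => 1 :: minPushAfter y t

theorem length_minPushAfter (x : ℕ) (t : List ℕ) : (minPushAfter x t).length = t.length := by
  induction t generalizing x with
  | nil => rfl
  | cons y t ih => rw [minPushAfter, List.length_cons, List.length_cons, ih]

theorem length_minPush (q : List ℕ) : (minPush q).length = q.length := by
  cases q with
  | nil => rfl
  | cons y t => rw [minPush, List.length_cons, List.length_cons, length_minPushAfter]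

theorem sum_minPushAfter (x : ℕ) (t : List ℕ) :
    (minPushAfter x t).sum + 2 = 2 * numRuns (x :: t) := by
  induction t generalizing x with
  | nil => rfl
  | cons y t ih =>
    have := ih y
    simp only [minPushAfter, numRuns, List.sum_cons]
    split_ifs <;> omega

theorem sum_minPush {q : List ℕ} (hq : q ≠ []) : (minPush q).sum + 1 = 2 * numRuns q := by
  cases q with
  | nil => exact absurd rfl hq
  | cons y t =>
    rw [← sum_minPushAfter, minPush, List.sum_cons]
    ring

/-- Run the stack backwards: a pair `(a, x)` stands for `a` pushes followed by the pop of `x`.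
The result consists of the stack contents before the word is read and the letters it pushes. -/
def unsortAux : List (ℕ × ℕ) → List ℕ × List ℕ
  | [] => ([], [])
  | (a, x) :: w =>
    ((x :: (unsortAux w).1).drop a, ((x :: (unsortAux w).1).take a).reverse ++ (unsortAux w).2)

theorem unsortAux_succ {a b m : ℕ} {w : List (ℕ × ℕ)} {st out : List ℕ}
    (h : unsortAux ((a, b) :: w) = (m :: st, out)) :
    unsortAux ((a + 1, b) :: w) = (st, m :: out) := by
  simp only [unsortAux, Prod.mk.injEq] at h ⊢
  obtain ⟨hst, rfl⟩ := h
  refine ⟨by rw [← List.drop_drop, hst]; rfl, ?_⟩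
  rw [List.take_add, hst]
  simp

/-- The word `w` records a run of the stack on the input `p`: each entry `(a, x)` stands for `a`
pushes followed by the pop of `x`. -/
structure IsStackWord (p : List ℕ) (w : List (ℕ × ℕ)) : Prop where
  map_snd : w.map Prod.snd = stackSort p
  sum_map_fst : (w.map Prod.fst).sum = p.length
  one_le_head : ∀ s ∈ w.head?, 1 ≤ s.1
  isChain : w.IsChain fun s t => t.2 < s.2 → 2 ≤ t.1
  unsortAux_append : ∀ w', unsortAux (w ++ w') = ((unsortAux w').1, p ++ (unsortAux w').2)

namespace IsStackWord

theorem nil : IsStackWord [] [] := ⟨rfl, rfl, by simp, .nil, fun _ => rfl⟩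

variable {L R p : List ℕ} {m : ℕ} {v w : List (ℕ × ℕ)}

theorem mem_of_mem (hw : IsStackWord p w) {s : ℕ × ℕ} (hs : s ∈ w) : s.2 ∈ p :=
  mem_stackSort.1 (hw.map_snd ▸ List.mem_map_of_mem hs)

theorem append_singleton (hv : IsStackWord L v) (hL : ∀ x ∈ L, x < m) :
    IsStackWord (L ++ [m]) (v ++ [(1, m)]) where
  map_snd := by
    rw [stackSort_append_cons hL (by simp), List.map_append, hv.map_snd]
    simp [stackSort, sortAux]
  sum_map_fst := by simp [hv.sum_map_fst]
  one_le_head := by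
    cases v with
    | nil => simp
    | cons s v => simpa using hv.one_le_head
  isChain := by
    refine List.isChain_append.2 ⟨hv.isChain, .singleton _, fun s hs t ht hlt => ?_⟩
    obtain rfl : (1, m) = t := by simpa using ht
    exact absurd (hL _ (hv.mem_of_mem (List.mem_of_mem_getLast? hs))) hlt.not_gt
  unsortAux_append w' := by
    rw [List.append_assoc, hv.unsortAux_append]
    simp [unsortAux]

theorem append_cons {a b : ℕ} (hv : IsStackWord L v) (hw : IsStackWord R ((a, b) :: w))
    (hL : ∀ x ∈ L, x < m) (hR : ∀ x ∈ R, x < m) :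
    IsStackWord (L ++ m :: R) (v ++ ((a + 1, b) :: w ++ [(0, m)])) where
  map_snd := by
    have hmap := hw.map_snd
    rw [List.map_cons] at hmap
    simp [stackSort_append_cons hL hR, ← hmap, hv.map_snd]
  sum_map_fst := by
    have hsum := hw.sum_map_fst
    simp only [List.map_append, List.map_cons, List.map_nil, List.sum_append, List.sum_cons,
      List.sum_nil, List.length_append, List.length_cons, hv.sum_map_fst] at hsum ⊢
    omega
  one_le_head := by
    cases v with
    | nil => simp
    | cons s v => simpa using hv.one_le_head
  isChain := by
    have ha : 1 ≤ a := hw.one_le_head (a, b) rfl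
    have hchain := List.isChain_cons.1 hw.isChain
    refine List.isChain_append.2 ⟨hv.isChain, List.isChain_append.2
      ⟨List.isChain_cons.2 hchain, .singleton _, fun s hs t ht hlt => ?_⟩, fun s _ t ht _ => ?_⟩
    · obtain rfl : (0, m) = t := by simpa using ht
      have hsR : s.2 ∈ R := by
        rcases List.mem_cons.1 (List.mem_of_mem_getLast? hs) with rfl | hs
        · exact hw.mem_of_mem (s := (a, b)) List.mem_cons_self
        · exact hw.mem_of_mem (List.mem_cons_of_mem _ hs)
      exact absurd (hR _ hsR) hlt.not_gt
    · obtain rfl : (a + 1, b) = t := by simpa using ht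
      exact Nat.succ_le_succ ha
  unsortAux_append w' := by
    have hrun : unsortAux ((a, b) :: (w ++ ([(0, m)] ++ w'))) =
        (m :: (unsortAux w').1, R ++ (unsortAux w').2) := by
      rw [← List.cons_append, hw.unsortAux_append]
      simp [unsortAux]
    rw [List.append_assoc, hv.unsortAux_append, List.append_assoc, List.cons_append,
      unsortAux_succ hrun]
    simp

theorem exists_of_nodup (hp : p.Nodup) : ∃ w, IsStackWord p w := by
  refine nodup_max_induction (P := fun p => ∃ w, IsStackWord p w) ⟨[], nil⟩ ?_ p hp
  rintro L m R hL hR - ⟨v, hv⟩ ⟨w, hw⟩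
  cases w with
  | nil =>
    obtain rfl : R = [] := List.eq_nil_of_length_eq_zero hw.sum_map_fst.symm
    exact ⟨_, hv.append_singleton hL⟩
  | cons s w => exact ⟨_, hv.append_cons hw hL hR⟩

theorem forall₂_minPush_le (hw : IsStackWord p w) :
    List.Forall₂ (· ≤ ·) (minPush (stackSort p)) (w.map Prod.fst) := by
  have hafter : ∀ (s : ℕ × ℕ) (w : List (ℕ × ℕ)),
      (s :: w).IsChain (fun s t => t.2 < s.2 → 2 ≤ t.1) →
      List.Forall₂ (· ≤ ·) (minPushAfter s.2 (w.map Prod.snd)) (w.map Prod.fst) := by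
    intro s w hchain
    induction w generalizing s with
    | nil => exact .nil
    | cons t w ih =>
      rw [List.isChain_cons_cons] at hchain
      refine .cons ?_ (ih t hchain.2)
      split_ifs with hlt
      · exact hchain.1 hlt
      · exact Nat.zero_le _
  rw [← hw.map_snd]
  cases w with
  | nil => exact .nil
  | cons s w => exact .cons (hw.one_le_head s rfl) (hafter s w hw.isChain)

end IsStackWord

theorem exists_zipWith_add_eq_of_forall₂_le {a b : List ℕ} (h : List.Forall₂ (· ≤ ·) a b) :
    ∃ e : List ℕ, e.length = a.length ∧ List.zipWith (· + ·) a e = b ∧ e.sum + a.sum = b.sum := by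
  induction h with
  | nil => exact ⟨[], rfl, rfl, rfl⟩
  | @cons x y a b hxy _ ih =>
    obtain ⟨e, hlen, hzip, hsum⟩ := ih
    refine ⟨(y - x) :: e, ?_, ?_, ?_⟩
    · rw [List.length_cons, List.length_cons, hlen]
    · rw [List.zipWith_cons_cons, hzip, Nat.add_sub_cancel' hxy]
    · simp only [List.sum_cons]
      omega

/-- The input that the stack transforms into `q` when `f i` pushes beyond the least possible number
precede the pop of the `i`-th letter. -/
def unsort (q : List ℕ) (f : ℕ → ℕ) : List ℕ :=
  (unsortAux (List.zip (List.zipWith (· + ·) (minPush q) ((List.range q.length).map f)) q)).2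

theorem exists_unsort_eq {p : List ℕ} (hp : p.Nodup) (hne : p ≠ []) :
    ∃ e, e + 2 * numRuns (stackSort p) = p.length + 1 ∧
      ∃ f ∈ finsuppAntidiag (range p.length) e, unsort (stackSort p) f = p := by
  obtain ⟨w, hw⟩ := IsStackWord.exists_of_nodup hp
  obtain ⟨e, hlen, hzip, hsum⟩ := exists_zipWith_add_eq_of_forall₂_le hw.forall₂_minPush_le
  rw [length_minPush, length_stackSort] at hlen
  have hne' : stackSort p ≠ [] := fun h => hne
    (List.eq_nil_of_length_eq_zero (by rw [← length_stackSort, h, List.length_nil]))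
  have hmap : (List.range p.length).map e.toFinsupp = e :=
    List.ext_getElem (by simp [hlen]) fun i _ hi => by simp [List.toFinsupp_apply, hi]
  refine ⟨e.sum, by have := sum_minPush hne'; have := hw.sum_map_fst; omega, e.toFinsupp, ?_, ?_⟩
  · refine mem_finsuppAntidiag.2 ⟨?_, fun i hi => ?_⟩
    · conv_rhs => rw [← hmap]
      rfl
    · rw [← hlen]
      by_contra hcon
      refine Finsupp.mem_support_iff.1 hi ?_
      rw [List.toFinsupp_apply, List.getD_eq_default _ _ (by simpa using hcon)]
  · rw [unsort, length_stackSort, hmap, hzip, ← hw.map_snd, ← List.zip_of_prod (xs := w) rfl rfl]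
    simpa [unsortAux] using congrArg Prod.snd (hw.unsortAux_append [])

theorem two_mul_numRuns_stackSort_le {p : List ℕ} (hp : p.Nodup) :
    2 * numRuns (stackSort p) ≤ p.length + 1 := by
  rcases eq_or_ne p [] with rfl | hne
  · exact Nat.zero_le _
  · obtain ⟨e, he, -⟩ := exists_unsort_eq hp hne
    omega

/-- A word `q` determines a stack word up to the pushes beyond the forced ones, so its preimages
are counted by the ways of distributing the remaining pushes among the letters. -/
theorem card_le_choose_of_forall_stackSort_eq {q : List ℕ} (hq : q ≠ []) {s : Finset (List ℕ)}
    (hs : ∀ p ∈ s, p.Nodup ∧ stackSort p = q) :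
    #s ≤ (2 * q.length - 2 * numRuns q).choose (q.length - 1) := by
  rcases s.eq_empty_or_nonempty with rfl | ⟨p₀, hp₀⟩
  · exact Nat.zero_le _
  have hex : ∀ p ∈ s, ∃ e, e + 2 * numRuns q = q.length + 1 ∧
      ∃ f ∈ finsuppAntidiag (range q.length) e, unsort q f = p := by
    intro p hp
    obtain ⟨hnodup, rfl⟩ := hs p hp
    rw [length_stackSort]
    refine exists_unsort_eq hnodup fun h => hq ?_
    rw [h]
    rfl
  obtain ⟨e, he, -⟩ := hex p₀ hp₀
  have hlen := List.length_pos_iff.2 hq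
  have hsub : s ⊆ (finsuppAntidiag (range q.length) e).image fun f : ℕ →₀ ℕ => unsort q f := by
    intro p hp
    obtain ⟨e', he', f, hf, hfp⟩ := hex p hp
    obtain rfl : e' = e := by omega
    exact mem_image.2 ⟨f, hf, hfp⟩
  calc #s ≤ #(finsuppAntidiag (range q.length) e) := (card_le_card hsub).trans card_image_le
    _ = (q.length + e - 1).choose e := by rw [card_finsuppAntidiag_nat_eq_choose, card_range]
    _ = _ := by
      rw [Nat.choose_symm_of_eq_add (show q.length + e - 1 = e + (q.length - 1) by omega)]
      congr 1
      omega

/-- The `k`-stack sortable permutations of length `n`. -/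
def sortable (k n : ℕ) : Finset (List ℕ) :=
  {p ∈ (List.range' 1 n).permutations.toFinset | stackSort^[k] p = List.range' 1 n}

theorem mem_sortable {k n : ℕ} {p : List ℕ} :
    p ∈ sortable k n ↔ p.Perm (List.range' 1 n) ∧ stackSort^[k] p = List.range' 1 n := by
  simp [sortable]

theorem nodup_of_mem_sortable {k n : ℕ} {p : List ℕ} (hp : p ∈ sortable k n) : p.Nodup :=
  (mem_sortable.1 hp).1.nodup_iff.2 List.nodup_range'

theorem length_of_mem_sortable {k n : ℕ} {p : List ℕ} (hp : p ∈ sortable k n) : p.length = n := by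
  rw [(mem_sortable.1 hp).1.length_eq, List.length_range']

theorem stackSort_mem_sortable {k n : ℕ} {p : List ℕ} (hp : p ∈ sortable (k + 1) n) :
    stackSort p ∈ sortable k n :=
  mem_sortable.2 ⟨(stackSort_perm p).trans (mem_sortable.1 hp).1, (mem_sortable.1 hp).2⟩

theorem card_sortable_succ_le {n : ℕ} (k : ℕ) (hn : 1 ≤ n) :
    #(sortable (k + 1) n) ≤ ∑ r ∈ Icc 1 ((n + 1) / 2),
      #{q ∈ sortable k n | numRuns q = r} * (2 * n - 2 * r).choose (n - 1) := by
  have hne : ∀ q ∈ sortable k n, q ≠ [] := fun q hq h =>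
    absurd (length_of_mem_sortable hq) (by rw [h, List.length_nil]; omega)
  have hruns : ∀ p ∈ sortable (k + 1) n, numRuns (stackSort p) ∈ Icc 1 ((n + 1) / 2) := by
    intro p hp
    have hle := two_mul_numRuns_stackSort_le (nodup_of_mem_sortable hp)
    rw [length_of_mem_sortable hp] at hle
    exact mem_Icc.2 ⟨one_le_numRuns (hne _ (stackSort_mem_sortable hp)), by omega⟩
  rw [card_eq_sum_card_fiberwise hruns]
  refine sum_le_sum fun r _ => ?_
  rw [mul_comm]
  refine card_le_mul_card_image_of_maps_to (f := stackSort) (fun p hp => ?_) _ fun q hq => ?_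
  · rw [mem_filter] at hp ⊢
    exact ⟨stackSort_mem_sortable hp.1, hp.2⟩
  · obtain ⟨hqn, rfl⟩ := mem_filter.1 hq
    rw [← length_of_mem_sortable hqn]
    refine card_le_choose_of_forall_stackSort_eq (hne q hqn) fun p hp => ?_
    rw [mem_filter, mem_filter] at hp
    exact ⟨nodup_of_mem_sortable hp.1.1, hp.2⟩

/-! ### Words whose stack sorting avoids 231 -/

theorem countP_lt_countP_of_mem {α : Type*} {P Q : α → Bool} {l : List α} {x : α}
    (hPQ : ∀ y ∈ l, P y → Q y) (hx : x ∈ l) (hP : ¬ P x) (hQ : Q x) : l.countP P < l.countP Q := by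
  obtain ⟨S, T, rfl⟩ := List.append_of_mem hx
  have hS : S.countP P ≤ S.countP Q := List.countP_mono_left fun y hy => hPQ y (by simp [hy])
  have hT : T.countP P ≤ T.countP Q := List.countP_mono_left fun y hy => hPQ y (by simp [hy])
  rw [List.countP_append, List.countP_append, List.countP_cons_of_neg hP,
    List.countP_cons_of_pos hQ]
  omega

theorem filter_append_filter_not_of_pairwise {α : Type*} {P : α → Bool} {l : List α}
    (h : l.Pairwise fun x y => P y → P x) : l.filter P ++ l.filter (!P ·) = l := by
  induction l with
  | nil => rfl
  | cons x l ih =>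
    rw [List.pairwise_cons] at h
    by_cases hx : P x
    · rw [List.filter_cons_of_pos hx, List.filter_cons_of_neg (by simpa using hx),
        List.cons_append, ih h.2]
    · have hall : ∀ y ∈ l, ¬ P y := fun y hy hPy => hx (h.1 y hy hPy)
      rw [List.filter_eq_nil_iff.2 (List.forall_mem_cons.2 ⟨hx, hall⟩), List.nil_append,
        List.filter_eq_self]
      simpa only [List.mem_cons, forall_eq_or_imp, Bool.not_eq_true, Bool.not_eq_eq_eq_not,
        Bool.not_true] using And.intro hx hall

namespace Avoids231

variable {L R : List ℕ} {m : ℕ}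

theorem exists_stackSort_left_eq (hav : Avoids231 (stackSort L ++ stackSort R ++ [m]))
    (hn : (L ++ R).Nodup) (hne : L ≠ []) :
    ∃ A ℓ, stackSort L = A ++ [ℓ] ∧ (∀ x ∈ A, x < ℓ) ∧ (∀ x ∈ A, ∀ y ∈ R, x < y) ∧
      R.countP (fun y => ∃ x ∈ L, y < x) = R.countP (· < ℓ) := by
  obtain ⟨hL, -, hLR⟩ := List.nodup_append.1 hn
  obtain ⟨A, ℓ, hA, hAℓ⟩ := exists_stackSort_eq_concat hL hne
  have hmem : ∀ {x}, x ∈ L ↔ x ∈ A ∨ x = ℓ := fun {x} => by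
    rw [← mem_stackSort, hA, List.mem_append, List.mem_singleton]
  have hAR : ∀ x ∈ A, ∀ y ∈ R, x < y := by
    intro x hx y hy
    by_contra hxy
    refine hav x ℓ y ?_ ((not_lt.1 hxy).lt_of_ne (hLR x (hmem.2 (.inl hx)) y hy).symm) (hAℓ x hx)
    rw [hA, List.append_assoc, List.append_assoc]
    exact (List.singleton_sublist.2 hx).append ((List.Sublist.refl [ℓ]).append
      ((List.singleton_sublist.2 (mem_stackSort.2 hy)).trans (List.sublist_append_left _ _)))
  refine ⟨A, ℓ, hA, hAℓ, hAR, List.countP_congr fun y hy => ?_⟩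
  simp only [decide_eq_true_eq]
  refine ⟨fun ⟨x, hx, hyx⟩ => ?_, fun h => ⟨ℓ, hmem.2 (.inr rfl), h⟩⟩
  exact (hmem.1 hx).elim (fun hx => absurd (hAR x hx y hy) hyx.not_gt) fun hx => hx ▸ hyx

/-- The letters of `L` are recognizable from their ranks: the letters other than the maximum of `L`
come first, then those letters of `R` that are smaller than the maximum of `L`. -/
theorem mem_left_iff_rank (hav : Avoids231 (stackSort L ++ stackSort R ++ [m]))
    (hn : (L ++ R).Nodup) {x : ℕ} (hx : x ∈ L ++ R) :
    x ∈ L ↔ (L ++ R).countP (· < x) + 1 < L.length ∨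
      (L ++ R).countP (· < x) + 1 = L.length + R.countP (fun y => ∃ z ∈ L, y < z) := by
  rcases eq_or_ne L [] with rfl | hne
  · simp
  obtain ⟨A, ℓ, hA, hAℓ, hAR, hd⟩ := hav.exists_stackSort_left_eq hn hne
  have hperm : L.Perm (A ++ [ℓ]) := hA ▸ (stackSort_perm L).symm
  have hrank : (L ++ R).countP (· < x) =
      A.countP (· < x) + (if ℓ < x then 1 else 0) + R.countP (· < x) := by
    rw [List.countP_append, hperm.countP_eq, List.countP_append, List.countP_singleton]
    simp only [decide_eq_true_eq]
  rw [hrank, hd, hperm.length_eq, List.length_append, List.length_singleton]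
  rcases List.mem_append.1 hx with hxL | hxR
  · simp only [hxL, true_iff]
    rcases List.mem_append.1 (hperm.mem_iff.1 hxL) with hxA | hxℓ
    · have hlt : A.countP (· < x) < A.length :=
        List.countP_lt_length_iff.2 ⟨x, hxA, by simp⟩
      have hzero : R.countP (· < x) = 0 := by
        simpa using fun y hy => (hAR x hxA y hy).le
      have := hAℓ x hxA
      split_ifs <;> omega
    · obtain rfl := List.mem_singleton.1 hxℓ
      have hfull : A.countP (· < x) = A.length := by simpa using hAℓ
      rw [if_neg (lt_irrefl x)]
      omega
  · have hxL : x ∉ L := fun h => (List.nodup_append.1 hn).2.2 x h x hxR rfl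
    have hfull : A.countP (· < x) = A.length := by simpa using fun y hy => hAR y hy x hxR
    simp only [hxL, false_iff]
    rcases lt_trichotomy x ℓ with hlt | rfl | hgt
    · have hcount : R.countP (· < x) < R.countP (· < ℓ) :=
        countP_lt_countP_of_mem (fun y _ hy => by simp only [decide_eq_true_eq] at hy ⊢; omega) hxR
          (by simp) (by simpa)
      rw [if_neg hlt.not_gt]
      omega
    · exact absurd (hperm.mem_iff.2 (by simp)) hxL
    · have hcount : R.countP (· < ℓ) ≤ R.countP (· < x) :=
        List.countP_mono_left fun y _ hy => by simp only [decide_eq_true_eq] at hy ⊢; omega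
      rw [if_pos hgt]
      omega

end Avoids231

/-! ### The trees of 2-stack sortable permutations -/

/-- Binary trees recording the recursive decomposition `L m R` of a permutation at its maximum `m`;
a node is labelled by the number of letters of `R` that are smaller than the maximum of `L`. -/
inductive CutTree
  | nil
  | node (l r : CutTree) (d : ℕ)
  deriving DecidableEq

namespace CutTree

/-- The length of the encoded permutation. -/
def size : CutTree → ℕ
  | nil => 0
  | node l r _ => l.size + r.size + 1

/-- The number of nodes without left child, which is `numRuns` of the encoded permutation. -/
def runs : CutTree → ℕ
  | nil => 0
  | node l r _ => l.runs + r.runs + if l = nil then 1 else 0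

/-- The number of nodes without right child. -/
def coruns : CutTree → ℕ
  | nil => 0
  | node l r _ => l.coruns + r.coruns + if r = nil then 1 else 0

/-- The lengths of the prefixes `w₁` in the decompositions `s(p) = w₁ w₂` such that every letter
of `w₁` is smaller than every letter of `w₂`, where `p` is the encoded permutation. -/
def cuts : CutTree → Finset ℕ
  | nil => {0}
  | node l r d => {e ∈ l.cuts | e < l.size} ∪ {e ∈ r.cuts | d ≤ e}.image (l.size + ·) ∪
      {l.size + r.size + 1}

/-- The admissible labels of a node with given children. -/
def positions : CutTree → CutTree → Finset ℕ
  | nil, _ => {0}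
  | node _ _ _, r => r.cuts

/-- All labels of the tree are admissible. -/
def IsValid : CutTree → Prop
  | nil => True
  | node l r d => l.IsValid ∧ r.IsValid ∧ d ∈ positions l r

/-- The non-empty trees with admissible labels whose height is at most `h`. -/
def ofHeight : ℕ → Finset CutTree
  | 0 => ∅
  | h + 1 => (insert nil (ofHeight h) ×ˢ insert nil (ofHeight h)).biUnion fun c =>
      (positions c.1 c.2).image (node c.1 c.2)

theorem size_eq_zero {t : CutTree} : t.size = 0 ↔ t = nil := by
  cases t <;> simp [size]

theorem nil_notMem_ofHeight (h : ℕ) : nil ∉ ofHeight h := by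
  cases h <;> simp [ofHeight]

theorem IsValid.mem_ofHeight {h : ℕ} {t : CutTree} (hv : t.IsValid) (ht : t ≠ nil)
    (hs : t.size ≤ h) : t ∈ ofHeight h := by
  induction t generalizing h with
  | nil => exact absurd rfl ht
  | node l r d ihl ihr =>
    rw [size] at hs
    obtain ⟨h, rfl⟩ := Nat.exists_eq_add_of_le' (show 1 ≤ h by omega)
    refine mem_biUnion.2 ⟨(l, r), mem_product.2 ⟨mem_insert.2 ?_, mem_insert.2 ?_⟩,
      mem_image_of_mem _ hv.2.2⟩
    · exact or_iff_not_imp_left.2 fun hl => ihl hv.1 hl (by omega)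
    · exact or_iff_not_imp_left.2 fun hr => ihr hv.2.1 hr (by omega)

theorem runs_add_coruns (t : CutTree) :
    t.runs + t.coruns + (if t = nil then 1 else 0) = t.size + 1 := by
  induction t with
  | nil => rfl
  | node l r d ihl ihr =>
    simp only [runs, coruns, size, reduceCtorEq, if_false]
    omega

theorem size_mem_cuts (t : CutTree) : t.size ∈ t.cuts := by
  cases t <;> simp [size, cuts]

theorem le_size_of_mem_cuts {t : CutTree} {e : ℕ} (he : e ∈ t.cuts) : e ≤ t.size := by
  induction t generalizing e with
  | nil => exact (mem_singleton.1 he).le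
  | node l r d _ ihr =>
    simp only [cuts, mem_union, mem_filter, mem_image, mem_singleton] at he
    rw [size]
    rcases he with (⟨-, he⟩ | ⟨f, ⟨hf, -⟩, rfl⟩) | rfl
    · omega
    · have := ihr hf
      omega
    · rfl

theorem card_cuts_node (l r : CutTree) (d : ℕ) :
    #(node l r d).cuts = #l.cuts + #{e ∈ r.cuts | d ≤ e} := by
  have hl : {e ∈ l.cuts | e < l.size} = l.cuts.erase l.size := by
    ext e
    rw [mem_filter, mem_erase, and_comm]
    exact and_congr_left fun he => (le_size_of_mem_cuts he).lt_iff_ne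
  have hlr : Disjoint {e ∈ l.cuts | e < l.size} ({e ∈ r.cuts | d ≤ e}.image (l.size + ·)) := by
    simp only [disjoint_left, mem_filter, mem_image]
    rintro e ⟨-, he⟩ ⟨f, -, rfl⟩
    omega
  have htop : l.size + r.size + 1 ∉
      {e ∈ l.cuts | e < l.size} ∪ {e ∈ r.cuts | d ≤ e}.image (l.size + ·) := by
    simp only [mem_union, mem_filter, mem_image]
    rintro (⟨-, he⟩ | ⟨f, ⟨hf, -⟩, he⟩)
    · omega
    · have := le_size_of_mem_cuts hf
      omega
  rw [cuts, card_union_of_disjoint (disjoint_singleton_right.2 htop),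
    card_union_of_disjoint hlr, Finset.card_image_of_injective _ (add_right_injective _), hl,
    card_singleton, ← card_erase_add_one l.size_mem_cuts]
  ring

/-- The tree is the decomposition tree of the word `p`. -/
def Encodes : CutTree → List ℕ → Prop
  | nil, p => p = []
  | node l r d, p => ∃ L m R, p = L ++ m :: R ∧ (∀ x ∈ L, x < m) ∧ (∀ x ∈ R, x < m) ∧
      d = R.countP (fun x => ∃ y ∈ L, x < y) ∧ l.Encodes L ∧ r.Encodes R

theorem exists_encodes {p : List ℕ} (hp : p.Nodup) : ∃ t : CutTree, t.Encodes p := by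
  refine nodup_max_induction (P := fun p => ∃ t : CutTree, t.Encodes p) ⟨nil, rfl⟩ ?_ p hp
  rintro L m R hL hR - ⟨l, hl⟩ ⟨r, hr⟩
  exact ⟨node l r _, L, m, R, rfl, hL, hR, rfl, hl, hr⟩

namespace Encodes

variable {t : CutTree} {p : List ℕ}

theorem length_eq (h : t.Encodes p) : p.length = t.size := by
  induction t generalizing p with
  | nil => rw [h, size, List.length_nil]
  | node l r d ihl ihr =>
    obtain ⟨L, m, R, rfl, -, -, -, hl, hr⟩ := h
    rw [List.length_append, List.length_cons, ihl hl, ihr hr, size, add_assoc]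

theorem eq_nil_iff (h : t.Encodes p) : t = nil ↔ p = [] := by
  rw [← size_eq_zero, ← h.length_eq, List.length_eq_zero_iff]

theorem numRuns_eq (h : t.Encodes p) : numRuns p = t.runs := by
  induction t generalizing p with
  | nil => rw [h, runs, numRuns]
  | node l r d ihl ihr =>
    obtain ⟨L, m, R, rfl, hL, hR, -, hl, hr⟩ := h
    simp only [numRuns_append_cons hL hR, ihl hl, ihr hr, runs, hl.eq_nil_iff]

theorem length_mem_cuts (h : t.Encodes p) {w₁ w₂ : List ℕ} (hw : stackSort p = w₁ ++ w₂)
    (hlt : ∀ x ∈ w₁, ∀ y ∈ w₂, x < y) : w₁.length ∈ t.cuts := by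
  induction t generalizing p w₁ w₂ with
  | nil =>
    subst h
    obtain rfl : w₁ = [] := (List.append_eq_nil_iff.1 hw.symm).1
    exact mem_singleton_self 0
  | node l r d ihl ihr =>
    have hlen := h.length_eq
    obtain ⟨L, m, R, rfl, hL, hR, rfl, hl, hr⟩ := h
    rcases w₂.eq_nil_or_concat' with rfl | ⟨w₂, m', rfl⟩
    · rw [← length_stackSort, hw, List.append_nil] at hlen
      exact hlen ▸ size_mem_cuts _
    rw [stackSort_append_cons hL hR, ← List.append_assoc] at hw
    have hlt' : ∀ x ∈ w₁, ∀ y ∈ w₂, x < y := fun x hx y hy => hlt x hx y (by simp [hy])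
    have hright : ∀ c, w₁ = stackSort L ++ c → stackSort R = c ++ w₂ →
        w₁.length ∈ {e ∈ r.cuts | R.countP (fun x => ∃ y ∈ L, x < y) ≤ e}.image (l.size + ·) := by
      rintro c rfl hc
      have hcount : List.countP (fun x => ∃ y ∈ L, x < y) w₂ = 0 := by
        simp only [List.countP_eq_zero, decide_eq_true_eq, not_exists, not_and, not_lt]
        exact fun x hx y hy => (hlt' y (List.mem_append_left _ (mem_stackSort.2 hy)) x hx).le
      refine mem_image.2 ⟨c.length, mem_filter.2
        ⟨ihr hr hc fun x hx y hy => hlt' x (by simp [hx]) y hy, ?_⟩, ?_⟩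
      · rw [← (stackSort_perm R).countP_eq, hc, List.countP_append, hcount]
        exact List.countP_le_length
      · rw [List.length_append, length_stackSort, hl.length_eq]
    rw [cuts, mem_union, mem_union]
    refine .inl ?_
    rcases List.append_eq_append_iff.1 (List.append_inj' hw rfl).1 with ⟨c, hw₁, hc⟩ | ⟨c, hc, hw₂⟩
    · exact .inr (hright c hw₁ hc)
    rcases eq_or_ne c [] with rfl | hne
    · exact .inr (hright [] (by simp [hc]) (by simp [hw₂]))
    refine .inl (mem_filter.2 ⟨ihl hl hc fun x hx y hy => hlt' x hx y (by simp [hw₂, hy]), ?_⟩)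
    rw [← hl.length_eq, ← length_stackSort L, hc, List.length_append]
    exact Nat.lt_add_of_pos_right (List.length_pos_iff.2 hne)

theorem isValid (h : t.Encodes p) (hp : p.Nodup) (hav : Avoids231 (stackSort p)) : t.IsValid := by
  induction t generalizing p with
  | nil => trivial
  | node l r d ihl ihr =>
    obtain ⟨L, m, R, rfl, hL, hR, rfl, hl, hr⟩ := h
    rw [stackSort_append_cons hL hR] at hav
    have hn := (List.nodup_cons.1 (List.nodup_middle.1 hp)).2
    have hn' := List.nodup_append.1 hn
    refine ⟨ihl hl hn'.1 (hav.sublist (by simp)), ihr hr hn'.2.1 (hav.sublist (by simp)), ?_⟩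
    cases l with
    | nil => simp [show L = [] from hl, positions]
    | node l₁ l₂ e =>
      have hne : L ≠ [] := fun h => by simp [← hl.eq_nil_iff] at h
      obtain ⟨A, ℓ, hA, -, -, hd⟩ := hav.exists_stackSort_left_eq hn hne
      have hℓ : ℓ ∈ L := mem_stackSort.1 (by simp [hA])
      have hsplit := filter_append_filter_not_of_pairwise (P := (· < ℓ)) (l := stackSort R) <|
        List.pairwise_iff_forall_sublist.2 fun {x y} hxy hy => by
          simp only [decide_eq_true_eq] at hy ⊢
          by_contra hx
          have hxR : x ∈ R := mem_stackSort.1 (hxy.subset List.mem_cons_self)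
          refine hav ℓ x y ?_ hy ((not_lt.1 hx).lt_of_ne (hn'.2.2 ℓ hℓ x hxR))
          rw [hA]
          exact ((List.sublist_append_right A [ℓ]).append hxy).trans (List.sublist_append_left _ _)
      have hcut := hr.length_mem_cuts hsplit.symm fun x hx y hy => by
        simp only [List.mem_filter, decide_eq_true_eq, Bool.not_eq_eq_eq_not, Bool.not_true,
          decide_eq_false_iff_not] at hx hy
        omega
      rwa [← List.countP_eq_length_filter, (stackSort_perm R).countP_eq, ← hd] at hcut

theorem eq_of_perm {p' : List ℕ} (h : t.Encodes p) (h' : t.Encodes p') (hpp : p.Perm p')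
    (hp : p.Nodup) (hav : Avoids231 (stackSort p)) (hav' : Avoids231 (stackSort p')) : p = p' := by
  induction t generalizing p p' with
  | nil => rw [h, h']
  | node l r d ihl ihr =>
    obtain ⟨L, m, R, rfl, hL, hR, rfl, hl, hr⟩ := h
    obtain ⟨L', m', R', rfl, hL', hR', hd, hl', hr'⟩ := h'
    rw [stackSort_append_cons hL hR] at hav
    rw [stackSort_append_cons hL' hR'] at hav'
    obtain rfl : m = m' := by
      have hm : m ∈ L' ++ m' :: R' := hpp.mem_iff.1 (by simp)
      have hm' : m' ∈ L ++ m :: R := hpp.mem_iff.2 (by simp)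
      rw [List.mem_append, List.mem_cons] at hm hm'
      grind
    have hLR : (L ++ R).Perm (L' ++ R') :=
      (List.perm_middle.symm.trans (hpp.trans List.perm_middle)).cons_inv
    have hn := (List.nodup_cons.1 (List.nodup_middle.1 hp)).2
    have hn' := hLR.nodup_iff.1 hn
    have hLL : L.Perm L' := by
      have hlen : L.length = L'.length := hl.length_eq.trans hl'.length_eq.symm
      have hiff : ∀ x ∈ L ++ R, x ∈ L ↔ x ∈ L' := fun x hx => by
        rw [hav.mem_left_iff_rank hn hx, hav'.mem_left_iff_rank hn' (hLR.mem_iff.1 hx),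
          hLR.countP_eq, hlen, hd]
      refine (List.perm_ext_iff_of_nodup (List.nodup_append.1 hn).1 (List.nodup_append.1 hn').1).2
        fun x => ⟨fun hx => (hiff x (by simp [hx])).1 hx, fun hx =>
          (hiff x (hLR.mem_iff.2 (by simp [hx]))).2 hx⟩
    have hRR : R.Perm R' :=
      (List.perm_append_left_iff L).1 (hLR.trans (hLL.symm.append_right R'))
    rw [ihl hl hl' hLL (List.nodup_append.1 hn).1 (hav.sublist (by simp)) (hav'.sublist (by simp)),
      ihr hr hr' hRR (List.nodup_append.1 hn).2.1 (hav.sublist (by simp)) (hav'.sublist (by simp))]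

end Encodes

theorem card_filter_numRuns_sortable_two_le {n : ℕ} (k : ℕ) (hn : 1 ≤ n) :
    #{q ∈ sortable 2 n | numRuns q = k} ≤ #{t ∈ ofHeight n | t.size = n ∧ t.runs = k} := by
  have hav : ∀ p ∈ sortable 2 n, Avoids231 (stackSort p) := fun p hp =>
    avoids231_of_stackSort_sorted ((stackSort_perm p).nodup_iff.2 (nodup_of_mem_sortable hp)) <|
      (mem_sortable.1 hp).2.symm.subst List.pairwise_lt_range'
  refine card_le_card_of_forall_subsingleton (fun p t => t.Encodes p) (fun p hp => ?_) fun t _ => ?_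
  · rw [mem_filter] at hp
    obtain ⟨t, ht⟩ := exists_encodes (nodup_of_mem_sortable hp.1)
    have hsize : t.size = n := ht.length_eq.symm.trans (length_of_mem_sortable hp.1)
    refine ⟨t, mem_filter.2 ⟨IsValid.mem_ofHeight ?_ ?_ hsize.le, hsize,
      ht.numRuns_eq.symm.trans hp.2⟩, ht⟩
    · exact ht.isValid (nodup_of_mem_sortable hp.1) (hav p hp.1)
    · rw [ne_eq, ← size_eq_zero]
      omega
  · rintro p ⟨hp, ht⟩ p' ⟨hp', ht'⟩
    have hp := (mem_filter.1 hp).1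
    have hp' := (mem_filter.1 hp').1
    exact ht.eq_of_perm ht' ((mem_sortable.1 hp).1.trans (mem_sortable.1 hp').1.symm)
      (nodup_of_mem_sortable hp) (hav p hp) (hav p' hp')

end CutTree

/-! ### The functional equation -/

theorem sum_card_filter_le {M : Type*} [AddCommMonoid M] (s : Finset ℕ) (g : ℕ → M) :
    ∑ d ∈ s, g #{e ∈ s | d ≤ e} = ∑ i ∈ range #s, g (i + 1) := by
  induction s using Finset.induction_on_min with
  | empty => simp
  | insert a s ha ih =>
    have has : a ∉ s := fun h => lt_irrefl a (ha a h)
    rw [sum_insert has, card_insert_of_notMem has, sum_range_succ, ← ih, add_comm]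
    congr 1
    · refine sum_congr rfl fun d hd => ?_
      rw [filter_insert, if_neg (ha d hd).not_ge]
    · rw [filter_true_of_mem, card_insert_of_notMem has]
      exact forall_mem_insert _ _ _ |>.2 ⟨le_rfl, fun e he => (ha e he).le⟩

theorem sub_one_mul_sum_pow_card_filter_le {R : Type*} [CommRing R] (s : Finset ℕ) (u : R) :
    (u - 1) * ∑ d ∈ s, u ^ #{e ∈ s | d ≤ e} = u * (u ^ #s - 1) := by
  rw [sum_card_filter_le s (u ^ ·), ← mul_geom_sum, mul_left_comm, mul_sum _ _ u]
  simp only [_root_.pow_succ']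

namespace CutTree

variable {B : Type*} [CommRing B] (y z u : B)

/-- The monomial of a tree, in which `u` marks the cuts, `y` the runs and `z` the coruns. -/
def weight (t : CutTree) : B := u ^ #t.cuts * y ^ t.runs * z ^ t.coruns

/-- The generating polynomial of the non-empty trees of height at most `h`. -/
def heightGF (h : ℕ) : B := ∑ t ∈ ofHeight h, weight y z u t

theorem weight_nil : weight y z u nil = u := by
  simp [weight, cuts, runs, coruns]

theorem weight_node (l r : CutTree) (d : ℕ) :
    weight y z u (node l r d) = weight y z u l * (if l = nil then y else 1) *
      (u ^ #{e ∈ r.cuts | d ≤ e} * weight y z 1 r * if r = nil then z else 1) := by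
  rw [weight, card_cuts_node, runs, coruns, weight, weight]
  split_ifs <;> ring

theorem heightGF_succ (h : ℕ) : heightGF y z u (h + 1) = ∑ l ∈ insert nil (ofHeight h),
    ∑ r ∈ insert nil (ofHeight h), ∑ d ∈ positions l r, weight y z u (node l r d) := by
  rw [heightGF, ofHeight, sum_biUnion, sum_product]
  · refine sum_congr rfl fun l _ => sum_congr rfl fun r _ => sum_image fun d _ e _ hde => ?_
    exact (node.inj hde).2.2
  · refine fun c _ c' _ hne => disjoint_left.2 fun t ht ht' => hne ?_
    obtain ⟨d, -, rfl⟩ := mem_image.1 ht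
    obtain ⟨e, -, he⟩ := mem_image.1 ht'
    obtain ⟨hl, hr, -⟩ := node.inj he
    exact Prod.ext hl.symm hr.symm

theorem sum_weight_node_nil (r : CutTree) :
    ∑ d ∈ positions nil r, weight y z u (node nil r d) =
      u * y * (weight y z u r * if r = nil then z else 1) := by
  simp only [positions, sum_singleton, weight_node, weight_nil, if_true, Nat.zero_le,
    filter_true_of_mem, implies_true]
  simp only [weight]
  ring

theorem sub_one_mul_sum_weight_node {l : CutTree} (hl : l ≠ nil) (r : CutTree) :
    (u - 1) * ∑ d ∈ positions l r, weight y z u (node l r d) =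
      weight y z u l * (u * ((weight y z u r - weight y z 1 r) * if r = nil then z else 1)) := by
  obtain ⟨l₁, l₂, e, rfl⟩ : ∃ l₁ l₂ e, l = node l₁ l₂ e := by
    cases l with
    | nil => exact absurd rfl hl
    | node l₁ l₂ e => exact ⟨l₁, l₂, e, rfl⟩
  have hsum := sub_one_mul_sum_pow_card_filter_le r.cuts u
  simp only [positions, weight_node y z u _ r, if_neg hl, ← mul_sum, ← sum_mul]
  rw [show weight y z u r = u ^ #r.cuts * weight y z 1 r by simp [weight, mul_assoc]]
  linear_combination (weight y z u (node l₁ l₂ e) * weight y z 1 r *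
    if r = nil then z else 1) * hsum

theorem sum_insert_nil_weight_mul (h : ℕ) :
    ∑ r ∈ insert nil (ofHeight h), weight y z u r * (if r = nil then z else 1) =
      u * z + heightGF y z u h := by
  rw [sum_insert (nil_notMem_ofHeight h), weight_nil, if_pos rfl, heightGF]
  congr 1
  refine sum_congr rfl fun r hr => ?_
  rw [if_neg (ne_of_mem_of_not_mem hr (nil_notMem_ofHeight h)), mul_one]

theorem sub_one_mul_heightGF_succ (h : ℕ) :
    (u - 1) * heightGF y z u (h + 1) = (u - 1) * (u * y * (u * z + heightGF y z u h)) +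
      u * heightGF y z u h * (u * z + heightGF y z u h - (z + heightGF y z 1 h)) := by
  have hsub : ∑ r ∈ insert nil (ofHeight h), (weight y z u r - weight y z 1 r) *
      (if r = nil then z else 1) = u * z + heightGF y z u h - (z + heightGF y z 1 h) := by
    simp only [sub_mul, sum_sub_distrib, sum_insert_nil_weight_mul, one_mul]
  rw [heightGF_succ, sum_insert (nil_notMem_ofHeight h), mul_add]
  congr 1
  · simp only [sum_weight_node_nil, ← mul_sum, sum_insert_nil_weight_mul]
  · rw [mul_sum, ← hsub, mul_comm u, mul_assoc, heightGF, sum_mul]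
    refine sum_congr rfl fun l hl => ?_
    rw [mul_sum]
    simp only [sub_one_mul_sum_weight_node y z u
      (ne_of_mem_of_not_mem hl (nil_notMem_ofHeight h)), ← mul_sum]

theorem map_heightGF {B' : Type*} [CommRing B'] (f : B →+* B') (h : ℕ) :
    f (heightGF y z u h) = heightGF (f y) (f z) (f u) h := by
  simp only [heightGF, weight, map_sum, map_mul, map_pow]

end CutTree

/-! ### The solution of the functional equation -/

-- At `ε = 0` the parametrisation gives `u = 1` and `G = a * b * (1 - a - b)`, the subtracted term.
theorem functional_equation_of_parametrization {S : Type*} [CommRing S] {a b ε w u G : S}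
    (hw : w * ((1 + a * ε) * (1 + b * ε)) = 1) (hu : u = (1 + ε) * w)
    (hG : G = a * b * (1 - a - b - a * b * ε) * (1 + ε) ^ 2 * w) :
    (u - 1) * G = (u - 1) * (u * (a * (1 - b) ^ 2) * (u * (b * (1 - a) ^ 2) + G)) +
      u * G * (u * (b * (1 - a) ^ 2) + G - (b * (1 - a) ^ 2 + a * b * (1 - a - b))) := by
  have hu₁ : u - 1 = ε * (1 - a - b - a * b * ε) * w := by
    rw [hu]
    linear_combination hw
  rw [hu₁, hu, hG]
  linear_combination -(a * b * (1 - a - b - a * b * ε) * (1 + ε) ^ 2 *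
    (ε * (1 - a - b - a * b * ε) + (1 + ε) * (b * (1 - a) ^ 2 + a * b * (1 - a - b))) * w ^ 2) * hw

namespace CutTree

open PowerSeries

section

variable {R : Type*} [CommRing R] [IsDomain R]

-- Since `u - 1` is not divisible by `X`, the functional equation is an `X`-adic contraction.
theorem X_pow_dvd_sub_heightGF {y z u G : R⟦X⟧} (f : R →+* R) (hy : X ∣ y) (hz : X ∣ z)
    (hfy : map f y = y) (hfz : map f z = z) (hfu : map f u = 1) (hu : constantCoeff u ≠ 1)
    (hG : X ^ 2 ∣ G) (hsol : (u - 1) * G = (u - 1) * (u * y * (u * z + G)) +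
      u * G * (u * z + G - (z + map f G))) (h : ℕ) : X ^ (h + 2) ∣ G - heightGF y z u h := by
  have hmap : ∀ {n : ℕ} {F : R⟦X⟧}, X ^ n ∣ F → X ^ n ∣ map f F := fun {n F} hF => by
    simpa using map_dvd (map f) hF
  have hXG : X ∣ G := (dvd_pow_self X two_ne_zero).trans hG
  have hXu : ¬ X ∣ u - 1 := by
    rwa [X_dvd_iff, map_sub, map_one, sub_eq_zero]
  induction h with
  | zero => simpa [heightGF, ofHeight] using hG
  | succ h ih =>
    set F := heightGF y z u h with hF
    have hF₁ : map f F = heightGF y z 1 h := by rw [hF, map_heightGF, hfy, hfz, hfu]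
    have hXF : X ∣ F := (dvd_sub_right hXG).1 ((dvd_pow_self X (by omega)).trans ih)
    have hXG₁ : X ∣ map f G := by simpa using hmap (n := 1) (by simpa using hXG)
    refine X_prime.pow_dvd_of_dvd_mul_left _ hXu ?_
    have hdiff : (u - 1) * (G - heightGF y z u (h + 1)) =
        (G - F) * ((u - 1) * u * y + u * (u * z + G - (z + map f G)) + u * F) -
          map f (G - F) * (u * F) := by
      rw [mul_sub, sub_one_mul_heightGF_succ, ← hF, ← hF₁, map_sub, hsol]
      ring
    rw [hdiff, add_right_comm, _root_.pow_succ]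
    refine dvd_sub (mul_dvd_mul ih ?_) (mul_dvd_mul (hmap ih) (hXF.mul_left u))
    refine dvd_add (dvd_add (hy.mul_left _) ?_) (hXF.mul_left u)
    exact (dvd_sub (dvd_add (hz.mul_left u) hXG) (dvd_add hz hXG₁)).mul_left u

theorem X_pow_dvd_parametrization_sub_heightGF (f : R →+* R) {x e : R} (he : e ≠ 0)
    (hfe : f e = 0) (hfx : f x = x) (h : ℕ) : ∃ u G : R⟦X⟧, map f u = 1 ∧
      map f G = C x * X * X * (1 - C x * X - X) ∧
      X ^ (h + 2) ∣ G - heightGF (C x * X * (1 - X) ^ 2) (X * (1 - C x * X) ^ 2) u h := by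
  obtain ⟨w, hw⟩ : ∃ w : R⟦X⟧, w * ((1 + C x * X * C e) * (1 + X * C e)) = 1 := by
    refine IsUnit.exists_left_inv (isUnit_iff_constantCoeff.2 ?_)
    simp
  have hwc : constantCoeff w = 1 := by simpa using congrArg constantCoeff hw
  have hwf : map f w = 1 := by simpa [hfe] using congrArg (map f) hw
  have hGf : map f (C x * X * X * (1 - C x * X - X - C x * X * X * C e) * (1 + C e) ^ 2 * w) =
      C x * X * X * (1 - C x * X - X) := by
    simp [hfe, hfx, hwf]
  refine ⟨(1 + C e) * w, _, ?_, hGf, X_pow_dvd_sub_heightGF f ?_ ?_ ?_ ?_ ?_ ?_ ?_ ?_ h⟩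
  · simp [hfe, hwf]
  · exact dvd_mul_of_dvd_left (dvd_mul_left X (C x)) _
  · exact dvd_mul_right X _
  · simp [hfx]
  · simp [hfx]
  · simp [hfe, hwf]
  · simpa [hwc]
  · exact ⟨C x * (1 - C x * X - X - C x * X * X * C e) * (1 + C e) ^ 2 * w, by ring⟩
  · rw [hGf]
    exact functional_equation_of_parametrization hw rfl rfl

end

theorem X_pow_dvd_sub_heightGF_one {R : Type*} [CommRing R] [IsDomain R] (x : R) (h : ℕ) :
    X ^ (h + 2) ∣ C x * X * X * (1 - C x * X - X) -
      heightGF (C x * X * (1 - X) ^ 2) (X * (1 - C x * X) ^ 2) 1 h := by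
  obtain ⟨u, G, hu, hG, hdvd⟩ := X_pow_dvd_parametrization_sub_heightGF
    (Polynomial.C.comp (Polynomial.evalRingHom (0 : R))) (x := Polynomial.C x)
    (e := Polynomial.X) Polynomial.X_ne_zero (by simp) (by simp) h
  have hC : ∀ F : (Polynomial R)⟦X⟧, map (Polynomial.evalRingHom 0) F =
      map (Polynomial.evalRingHom 0) (map (Polynomial.C.comp (Polynomial.evalRingHom 0)) F) :=
    fun F => by
    ext
    simp
  have := map_dvd (map (Polynomial.evalRingHom (0 : R))) hdvd
  rw [map_sub, map_heightGF, hC u, hu, hC G, hG] at this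
  simpa using this

end CutTree

/-! ### Lagrange inversion -/

section InvOneSubPow

open PowerSeries

variable {R : Type*} [CommRing R]

theorem one_sub_pow_mul_invOneSubPow {d s : ℕ} (h : s ≤ d) :
    (1 - X) ^ s * (invOneSubPow R d).val = (invOneSubPow R (d - s)).val := by
  have := one_sub_pow_mul_invOneSubPow_val_add_eq_invOneSubPow_val R (d - s) s
  rwa [Nat.sub_add_cancel h] at this

theorem coeff_invOneSubPow_succ (d m : ℕ) :
    coeff m (invOneSubPow R (d + 1)).val = ((d + m).choose d : R) := by
  rw [invOneSubPow_val_succ_eq_mk_add_choose, coeff_mk]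

-- Compare the coefficients in `X * f' = d * X * (1 - X)⁻¹ * f` for `f = (1 - X) ^ (-d)`.
theorem mul_coeff_X_mul_invOneSubPow_succ (d m : ℕ) :
    (d : R) * coeff m (X * (invOneSubPow R (d + 1)).val) =
      m * coeff m (invOneSubPow R d).val := by
  cases m with
  | zero => simp
  | succ m =>
    rw [coeff_succ_X_mul, coeff_invOneSubPow_succ]
    cases d with
    | zero => simp [invOneSubPow_zero, coeff_one]
    | succ d =>
      have h := Nat.choose_succ_right_eq (d + 1 + m) d
      rw [show d + 1 + m - d = m + 1 by omega] at h
      rw [coeff_invOneSubPow_succ, show d + (m + 1) = d + 1 + m by ring]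
      exact_mod_cast congrArg (Nat.cast (R := R)) (show (d + 1) * _ = (m + 1) * _ by linarith)

theorem add_mul_coeff_X_mul_invOneSubPow_succ (d m : ℕ) :
    ((d : R) + m) * coeff m (X * (invOneSubPow R (d + 1)).val) =
      m * coeff m (invOneSubPow R (d + 1)).val := by
  have h := mul_coeff_X_mul_invOneSubPow_succ (R := R) d m
  have hd := one_sub_pow_mul_invOneSubPow (R := R) (Nat.le_add_left 1 d)
  rw [Nat.add_sub_cancel] at hd
  rw [← hd, pow_one, sub_mul, one_mul, map_sub] at h
  linear_combination h

theorem sub_mul_coeff_X_mul_invOneSubPow_succ {d s : ℕ} (h : s ≤ d) (m p : ℕ) :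
    ((d : R) - s) * coeff m (X * (X ^ p * (1 - X) ^ s) * (invOneSubPow R (d + 1)).val) =
      (m - p) * coeff m (X ^ p * (1 - X) ^ s * (invOneSubPow R d).val) := by
  rw [mul_assoc, mul_assoc, mul_left_comm, mul_assoc (X ^ p),
    one_sub_pow_mul_invOneSubPow h, one_sub_pow_mul_invOneSubPow (h.trans d.le_succ),
    Nat.succ_sub h, ← Nat.cast_sub h]
  rcases lt_or_ge m p with hm | hm
  · rw [coeff_X_pow_mul', coeff_X_pow_mul', if_neg hm.not_ge, if_neg hm.not_ge, mul_zero, mul_zero]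
  · rw [coeff_X_pow_mul', coeff_X_pow_mul', if_pos hm, if_pos hm, ← Nat.cast_sub hm]
    exact mul_coeff_X_mul_invOneSubPow_succ _ _

end InvOneSubPow

section Bivariate

open PowerSeries

/-- The coefficient of `x ^ i * t ^ (i + j)` in a series in `t` over `ℚ[x]`, i.e. the coefficient
of `a ^ i * b ^ j` in a series in `a = x * t` and `b = t`. -/
noncomputable def bicoeff (i j : ℕ) : (Polynomial ℚ)⟦X⟧ →+ ℚ :=
  (Polynomial.lcoeff ℚ i).toAddMonoidHom.comp (coeff (i + j)).toAddMonoidHom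

/-- Substitution of `a = x * t` into a univariate series. -/
noncomputable def substLeft : ℚ⟦X⟧ →+* (Polynomial ℚ)⟦X⟧ :=
  (rescale Polynomial.X).comp (map Polynomial.C)

/-- Substitution of `b = t` into a univariate series. -/
noncomputable def substRight : ℚ⟦X⟧ →+* (Polynomial ℚ)⟦X⟧ := map Polynomial.C

theorem bicoeff_apply (i j : ℕ) (F : (Polynomial ℚ)⟦X⟧) :
    bicoeff i j F = (coeff (i + j) F).coeff i := rfl

theorem substLeft_X : substLeft X = C Polynomial.X * X := by
  simp [substLeft, rescale_X]

theorem substRight_X : substRight X = X := map_X _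

theorem bicoeff_substLeft_mul_substRight (i j : ℕ) (f g : ℚ⟦X⟧) :
    bicoeff i j (substLeft f * substRight g) = coeff i f * coeff j g := by
  rw [bicoeff_apply, coeff_mul, Polynomial.finsetSum_coeff, sum_eq_single (i, j)]
  · simp [substLeft, substRight, coeff_rescale, mul_assoc]
  · rintro ⟨p, q⟩ h hne
    have hp : i ≠ p := by
      rintro rfl
      simp_all
    simp only [substLeft, substRight, RingHom.comp_apply, coeff_rescale, coeff_map, mul_assoc,
      ← Polynomial.C_mul]
    rw [mul_comm, Polynomial.coeff_C_mul_X_pow, if_neg hp]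
  · simp

/-- The kernel of the Lagrange-Good formula for `y = a * (1 - b) ^ 2` and `z = b * (1 - a) ^ 2`: the
Jacobian `∂(log y, log z) / ∂(log a, log b) = 1 - 4 * a * b / ((1 - a) * (1 - b))` divided by
`(1 - b) ^ (2 * i) * (1 - a) ^ (2 * j)`. -/
noncomputable def lagrangeKernel (i j : ℕ) : (Polynomial ℚ)⟦X⟧ :=
  substLeft (invOneSubPow ℚ (2 * j)).val * substRight (invOneSubPow ℚ (2 * i)).val -
    4 * (substLeft (X * (invOneSubPow ℚ (2 * j + 1)).val) *
      substRight (X * (invOneSubPow ℚ (2 * i + 1)).val))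

/-- The coefficient of `y ^ i * z ^ j`, where `y = a * (1 - b) ^ 2` and `z = b * (1 - a) ^ 2`, in a
series in `a = x * t` and `b = t`, as given by the Lagrange-Good formula. -/
noncomputable def lagrangeCoeff (i j : ℕ) : (Polynomial ℚ)⟦X⟧ →+ ℚ :=
  (bicoeff i j).comp (AddMonoidHom.mulLeft (lagrangeKernel i j))

theorem lagrangeCoeff_eq_zero_of_X_pow_dvd {i j n : ℕ} (h : i + j < n) {F : (Polynomial ℚ)⟦X⟧}
    (hF : X ^ n ∣ F) : lagrangeCoeff i j F = 0 := by
  have hcoeff := X_pow_dvd_iff.1 (hF.mul_left (lagrangeKernel i j)) _ h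
  rw [lagrangeCoeff, AddMonoidHom.comp_apply, AddMonoidHom.coe_mulLeft, bicoeff_apply, hcoeff,
    Polynomial.coeff_zero]

theorem lagrangeCoeff_substLeft_mul_substRight (i j : ℕ) (f g : ℚ⟦X⟧) :
    lagrangeCoeff i j (substLeft f * substRight g) =
      coeff i (f * (invOneSubPow ℚ (2 * j)).val) * coeff j (g * (invOneSubPow ℚ (2 * i)).val) -
      4 * (coeff i (X * f * (invOneSubPow ℚ (2 * j + 1)).val) *
        coeff j (X * g * (invOneSubPow ℚ (2 * i + 1)).val)) := by
  have h : lagrangeKernel i j * (substLeft f * substRight g) =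
      substLeft (f * (invOneSubPow ℚ (2 * j)).val) *
        substRight (g * (invOneSubPow ℚ (2 * i)).val) -
      4 • (substLeft (X * f * (invOneSubPow ℚ (2 * j + 1)).val) *
        substRight (X * g * (invOneSubPow ℚ (2 * i + 1)).val)) := by
    simp only [lagrangeKernel, map_mul, nsmul_eq_mul, Nat.cast_ofNat]
    ring
  rw [lagrangeCoeff, AddMonoidHom.comp_apply, AddMonoidHom.coe_mulLeft, h, map_sub, map_nsmul,
    bicoeff_substLeft_mul_substRight, bicoeff_substLeft_mul_substRight, nsmul_eq_mul,
    Nat.cast_ofNat]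

theorem mul_lagrangeCoeff_monomial {i j r s : ℕ} (hs : s ≤ 2 * j) (hr : r ≤ 2 * i) (p q : ℕ) :
    ((2 * j : ℚ) - s) * (2 * i - r) * lagrangeCoeff i j
        (substLeft (X ^ p * (1 - X) ^ s) * substRight (X ^ q * (1 - X) ^ r)) =
      ((2 * j - s) * (2 * i - r) - 4 * (i - p) * (j - q)) *
        (coeff i (X ^ p * (1 - X) ^ s * (invOneSubPow ℚ (2 * j)).val) *
          coeff j (X ^ q * (1 - X) ^ r * (invOneSubPow ℚ (2 * i)).val)) := by
  have hleft := sub_mul_coeff_X_mul_invOneSubPow_succ (R := ℚ) hs i p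
  have hright := sub_mul_coeff_X_mul_invOneSubPow_succ (R := ℚ) hr j q
  rw [lagrangeCoeff_substLeft_mul_substRight]
  push_cast at hleft hright
  linear_combination -4 * congrArg₂ (· * ·) hleft hright

theorem lagrangeCoeff_monomial_of_not_lt {i j p q : ℕ} (h : ¬ (p < i ∧ q < j)) (f g : ℚ⟦X⟧) :
    lagrangeCoeff i j (substLeft (X ^ p * f) * substRight (X ^ q * g)) =
      coeff i (X ^ p * (f * (invOneSubPow ℚ (2 * j)).val)) *
        coeff j (X ^ q * (g * (invOneSubPow ℚ (2 * i)).val)) := by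
  rw [lagrangeCoeff_substLeft_mul_substRight, ← mul_assoc X, ← mul_assoc X, ← _root_.pow_succ',
    ← _root_.pow_succ']
  simp only [mul_assoc]
  rw [sub_eq_self]
  rcases not_and_or.1 h with h | h
  · rw [coeff_X_pow_mul' _ (p + 1), if_neg (by omega), zero_mul, mul_zero]
  · rw [coeff_X_pow_mul' _ (q + 1), if_neg (by omega), mul_zero, mul_zero]

theorem lagrangeCoeff_monomial_of_lt {i j k l : ℕ} (hk : k < i) (hl : l < j) :
    lagrangeCoeff i j (substLeft (X ^ k * (1 - X) ^ (2 * l)) *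
      substRight (X ^ l * (1 - X) ^ (2 * k))) = 0 := by
  have h := mul_lagrangeCoeff_monomial (i := i) (j := j) (r := 2 * k) (s := 2 * l)
    (by omega) (by omega) k l
  have hki : (k : ℚ) < i := Nat.cast_lt.2 hk
  have hlj : (l : ℚ) < j := Nat.cast_lt.2 hl
  push_cast at h
  refine (mul_eq_zero.1 (h.trans ?_)).resolve_left (mul_ne_zero (by linarith) (by linarith))
  ring

theorem lagrangeCoeff_pow_mul_pow (i j k l : ℕ) :
    lagrangeCoeff i j ((C Polynomial.X * X * (1 - X) ^ 2) ^ k *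
      (X * (1 - C Polynomial.X * X) ^ 2) ^ l) = if k = i ∧ l = j then 1 else 0 := by
  have hsubst : (C Polynomial.X * X * (1 - X) ^ 2) ^ k * (X * (1 - C Polynomial.X * X) ^ 2) ^ l =
      substLeft (X ^ k * (1 - X) ^ (2 * l)) * substRight (X ^ l * (1 - X) ^ (2 * k)) := by
    simp only [map_mul, map_pow, map_sub, map_one, substLeft_X, substRight_X, mul_pow, ← pow_mul]
    ring
  have hinv : ∀ m, (1 - X) ^ (2 * m) * (invOneSubPow ℚ (2 * m)).val = 1 := fun m => by
    rw [one_sub_pow_mul_invOneSubPow (R := ℚ) le_rfl, Nat.sub_self, invOneSubPow_zero,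
      Units.val_one]
  rw [hsubst]
  by_cases hlt : k < i ∧ l < j
  · rw [lagrangeCoeff_monomial_of_lt hlt.1 hlt.2, if_neg (by omega)]
  rw [lagrangeCoeff_monomial_of_not_lt hlt]
  rcases lt_or_ge i k with hk | hk
  · rw [coeff_X_pow_mul', if_neg hk.not_ge, zero_mul, if_neg (by omega)]
  rcases lt_or_ge j l with hl | hl
  · rw [coeff_X_pow_mul' _ l, if_neg hl.not_ge, mul_zero, if_neg (by omega)]
  rcases eq_or_lt_of_le hk with rfl | hk
  · rcases eq_or_lt_of_le hl with rfl | hl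
    · simp [hinv]
    · rw [hinv, mul_one, coeff_X_pow, if_neg hl.ne', mul_zero, if_neg (by omega)]
  · obtain rfl : l = j := by omega
    rw [hinv, mul_one, coeff_X_pow, if_neg hk.ne', zero_mul, if_neg (by omega)]

theorem mul_lagrangeCoeff_X_pow (i j p q : ℕ) :
    (i * j : ℚ) * lagrangeCoeff i j (substLeft (X ^ p) * substRight (X ^ q)) =
      (i * j - (i - p) * (j - q)) * (coeff i (X ^ p * (invOneSubPow ℚ (2 * j)).val) *
        coeff j (X ^ q * (invOneSubPow ℚ (2 * i)).val)) := by
  have h := mul_lagrangeCoeff_monomial (Nat.zero_le (2 * j)) (Nat.zero_le (2 * i)) p q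
  simp only [pow_zero, mul_one, Nat.cast_zero, sub_zero] at h
  linear_combination h / 4

theorem mul_lagrangeCoeff_eq_choose_mul_choose (i j : ℕ) :
    ((i : ℚ) + 1) * (j + 1) * lagrangeCoeff (i + 1) (j + 1)
      (C Polynomial.X * X * X * (1 - C Polynomial.X * X - X)) =
        (2 * j + 1 + i).choose (2 * j + 1) * (2 * i + 1 + j).choose (2 * i + 1) := by
  have hsubst : C Polynomial.X * X * X * (1 - C Polynomial.X * X - X) =
      substLeft (X ^ 1) * substRight (X ^ 1) - substLeft (X ^ 2) * substRight (X ^ 1) -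
        substLeft (X ^ 1) * substRight (X ^ 2) := by
    simp only [map_pow, substLeft_X, substRight_X]
    ring
  have hone : ∀ d m : ℕ, coeff (m + 1) (X ^ 1 * (invOneSubPow ℚ (d + 1)).val) =
      ((d + m).choose d : ℚ) := fun d m => by
    rw [pow_one, coeff_succ_X_mul, coeff_invOneSubPow_succ]
  have htwo : ∀ d m : ℕ, ((d : ℚ) + m) * coeff (m + 1) (X ^ 2 * (invOneSubPow ℚ (d + 1)).val) =
      m * (d + m).choose d := fun d m => by
    rw [sq, mul_assoc, coeff_succ_X_mul, add_mul_coeff_X_mul_invOneSubPow_succ,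
      coeff_invOneSubPow_succ]
  have h₁₁ := mul_lagrangeCoeff_X_pow (i + 1) (j + 1) 1 1
  have h₂₁ := mul_lagrangeCoeff_X_pow (i + 1) (j + 1) 2 1
  have h₁₂ := mul_lagrangeCoeff_X_pow (i + 1) (j + 1) 1 2
  have hi := htwo (2 * j + 1) i
  have hj := htwo (2 * i + 1) j
  rw [show 2 * (i + 1) = 2 * i + 1 + 1 by ring, show 2 * (j + 1) = 2 * j + 1 + 1 by ring, hone]
    at h₁₁ h₂₁ h₁₂
  rw [hsubst, map_sub, map_sub]
  push_cast at h₁₁ h₂₁ h₁₂ hi hj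
  rw [hone] at h₁₁
  linear_combination h₁₁ - h₂₁ - h₁₂ - (2 * i + 1 + j).choose (2 * i + 1) * hi -
    (2 * j + 1 + i).choose (2 * j + 1) * hj

end Bivariate

namespace CutTree

open PowerSeries

theorem lagrangeCoeff_heightGF_one (i j h : ℕ) :
    lagrangeCoeff i j (heightGF (C Polynomial.X * X * (1 - X) ^ 2)
      (X * (1 - C Polynomial.X * X) ^ 2) 1 h) = #{t ∈ ofHeight h | t.runs = i ∧ t.coruns = j} := by
  simp only [heightGF, weight, one_pow, one_mul, map_sum, lagrangeCoeff_pow_mul_pow, sum_boole]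

theorem mul_card_filter_runs (i j : ℕ) :
    ((i : ℚ) + 1) * (j + 1) * #{t ∈ ofHeight (i + j + 1) | t.size = i + j + 1 ∧ t.runs = i + 1} =
      (2 * j + 1 + i).choose (2 * j + 1) * (2 * i + 1 + j).choose (2 * i + 1) := by
  have hcoruns : {t ∈ ofHeight (i + j + 1) | t.size = i + j + 1 ∧ t.runs = i + 1} =
      {t ∈ ofHeight (i + j + 1) | t.runs = i + 1 ∧ t.coruns = j + 1} := by
    refine filter_congr fun t ht => ?_
    have hsum := t.runs_add_coruns
    rw [if_neg (ne_of_mem_of_not_mem ht (nil_notMem_ofHeight _))] at hsum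
    omega
  have hdvd := X_pow_dvd_sub_heightGF_one (Polynomial.X : Polynomial ℚ) (i + j + 1)
  have hzero := lagrangeCoeff_eq_zero_of_X_pow_dvd
    (show (i + 1) + (j + 1) < i + j + 1 + 2 by omega) hdvd
  rw [map_sub, lagrangeCoeff_heightGF_one, sub_eq_zero] at hzero
  rw [hcoruns, ← hzero, mul_lagrangeCoeff_eq_choose_mul_choose]

theorem card_filter_runs {n k : ℕ} (hk : 1 ≤ k) (hkn : k ≤ n) :
    (#{t ∈ ofHeight n | t.size = n ∧ t.runs = k} : ℚ) = ((n + k - 1)! * (2 * n - k)! : ℚ) /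
      (k ! * (n + 1 - k)! * (2 * k - 1)! * (2 * n - 2 * k + 1)!) := by
  obtain ⟨i, rfl⟩ := Nat.exists_eq_add_of_le' hk
  obtain ⟨j, rfl⟩ := Nat.exists_eq_add_of_le' hkn
  have h := mul_card_filter_runs i j
  rw [Nat.cast_add_choose, Nat.cast_add_choose] at h
  rw [show j + (i + 1) = i + j + 1 by ring, eq_div_iff (by positivity),
    show i + j + 1 + (i + 1) - 1 = 2 * i + 1 + j by omega,
    show 2 * (i + j + 1) - (i + 1) = 2 * j + 1 + i by omega,
    show i + j + 1 + 1 - (i + 1) = j + 1 by omega, show 2 * (i + 1) - 1 = 2 * i + 1 by omega,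
    show 2 * (i + j + 1) - 2 * (i + 1) + 1 = 2 * j + 1 by omega, factorial_succ i, factorial_succ j]
  push_cast
  field_simp at h
  linear_combination h

end CutTree

/-- `W_3(n) ≤ ∑_{k=1}^{⌊(n+1)/2⌋} W_2(n, k−1) · C(2n−2k, n−1)`, where
`W_2(n, k−1) = (n+k−1)!(2n−k)!/(k!(n+1−k)!(2k−1)!(2n−2k+1)!)`. -/
theorem stmt_9 (n : ℕ) (hn : 1 ≤ n) :
    ({p : List ℕ | p.Perm (List.range' 1 n) ∧
        stackSort^[3] p = List.range' 1 n}.ncard : ℚ) ≤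
      ∑ k ∈ Finset.Icc 1 ((n + 1) / 2),
        (((n + k - 1)! * (2 * n - k)! : ℚ) /
            ((k)! * (n + 1 - k)! * (2 * k - 1)! * (2 * n - 2 * k + 1)!)) *
          (Nat.choose (2 * n - 2 * k) (n - 1) : ℚ) := by
  have hset : {p : List ℕ | p.Perm (List.range' 1 n) ∧ stackSort^[3] p = List.range' 1 n} =
      (sortable 3 n : Set (List ℕ)) := Set.ext fun p => mem_sortable.symm
  rw [hset, Set.ncard_coe_finset]
  refine (Nat.cast_le.2 (card_sortable_succ_le 2 hn)).trans ?_
  push_cast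
  refine Finset.sum_le_sum fun k hk => mul_le_mul_of_nonneg_right ?_ (Nat.cast_nonneg _)
  obtain ⟨hk, hkn⟩ := Finset.mem_Icc.1 hk
  exact (Nat.cast_le.2 (CutTree.card_filter_numRuns_sortable_two_le k hn)).trans_eq
    (CutTree.card_filter_runs hk (by omega))
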